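/- Let S be a countable set partitioned as S = ∪_{n≥M} S_n with each S_n finite, ω: S → ℝ with n ≤ ω(x) ≤ n+1 on S_n, λ > 1, and suppose there is h ≥ 0 so that for every ε > 0, eventually e^{n(h−ε)} ≤ #S_n ≤ e^{n(h+ε)}. Let 𝔇 be the diagonal operator on ℓ²(S) with 𝔇δ_x = λ^{ω(x)}δ_x, and a: S → (0,∞) a function bounded above and bounded below away from 0. Then inf{s > 0 : Σ_{x∈S} a(x)(1+λ^{2ω(x)})^{-s/2} < ∞} = h/log(λ). -/

import Mathlib

/-!
Up to constant factors, `a x * (1 + l ^ (2 * ω x)) ^ (-(s / 2))` is `e ^ (-t n)` on the `n`-th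
shell, where `t = s log l`, because `ω` tends to infinity and stays at bounded distance from the
shell index. Summing over shells therefore turns the series into `∑ n, #Sₙ e ^ (-t n)`. If `t`
exceeds the exponential growth rate `h` of `#Sₙ`, this is dominated by a geometric series; if
`t < h`, its terms do not tend to zero.
-/

open Filter Asymptotics Set

theorem tendsto_cofinite_atTop_of_finite_fiber {α β : Type*} [LinearOrder β]
    [LocallyFiniteOrder β] {f : α → β} (hbdd : BddBelow (range f))
    (hfin : ∀ b, {a | f a = b}.Finite) : Tendsto f cofinite atTop := by
  obtain ⟨m, hm⟩ := hbdd
  refine tendsto_atTop.2 fun b => eventually_cofinite.2 ?_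
  refine ((finite_Ico m b).preimage' fun b _ => hfin b).subset fun a ha => ?_
  exact ⟨hm (mem_range_self a), not_le.1 ha⟩

theorem summable_comp_iff_summable_ncard_fiber_mul {α β : Type*} {f : α → β} {g : β → ℝ}
    (hf : Tendsto f cofinite cofinite) (hg : 0 ≤ g) :
    Summable (fun a => g (f a)) ↔ Summable fun b => ({a | f a = b}.ncard : ℝ) * g b := by
  have hfin (b : β) : Finite {a | f a = b} :=
    Finite.to_subtype (by simpa using hf.eventually (eventually_cofinite_ne b))
  have htsum (b : β) : ∑' a : {a | f a = b}, g (f a) = ({a | f a = b}.ncard : ℝ) * g b := by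
    rw [tsum_congr fun a : {a | f a = b} => congrArg g a.2, tsum_const, nsmul_eq_mul,
      Nat.card_coe_set_eq]
  rw [summable_partition (fun a => hg (f a)) (s := fun b => {a | f a = b}) (by simp),
    summable_congr htsum]
  exact and_iff_right fun b => Summable.of_finite

theorem summable_exp_neg_mul_of_eventually_ncard_fiber_le {α : Type*} {f : α → ℤ} {t u : ℝ}
    (hf : Tendsto f cofinite atTop)
    (hcard : ∀ᶠ n : ℤ in atTop, ({a | f a = n}.ncard : ℝ) ≤ Real.exp (n * u)) (hut : u < t) :
    Summable fun a => Real.exp (-t * f a) := by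
  have hgeom : Summable fun n : ℕ => Real.exp (n * (u - t)) :=
    Real.summable_exp_nat_mul_iff.2 (sub_neg.2 hut)
  refine (summable_comp_iff_summable_ncard_fiber_mul (g := fun n : ℤ => Real.exp (-t * n))
    (hf.mono_right atTop_le_cofinite) fun n => (Real.exp_pos _).le).2 (.of_nat_of_neg ?_ ?_)
  · refine hgeom.of_norm_bounded_eventually_nat ?_
    filter_upwards [tendsto_natCast_atTop_atTop.eventually hcard] with n hn
    rw [Real.norm_of_nonneg (by positivity)]
    calc ({a | f a = n}.ncard : ℝ) * Real.exp (-t * (n : ℤ))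
        ≤ Real.exp ((n : ℤ) * u) * Real.exp (-t * (n : ℤ)) := by gcongr
      _ = Real.exp (n * (u - t)) := by
          rw [← Real.exp_add, Int.cast_natCast]
          ring_nf
  · obtain ⟨m, hm⟩ := hf.isBoundedUnder_ge_atTop.bddBelow_range_of_cofinite
    have hempty (n : ℤ) (hn : n < m) : {a | f a = n} = ∅ :=
      eq_empty_of_forall_notMem fun a ha => hn.not_ge (ha ▸ hm (mem_range_self a))
    refine hgeom.of_norm_bounded_eventually_nat ?_
    filter_upwards [eventually_gt_atTop (-m).toNat] with n hn
    simp [hempty (-n) (by lia), Real.exp_nonneg]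

theorem lt_of_frequently_le_ncard_fiber_of_summable_exp_neg_mul {α : Type*} {f : α → ℤ} {t u : ℝ}
    (hf : Tendsto f cofinite cofinite)
    (hcard : ∃ᶠ n : ℤ in atTop, Real.exp (n * u) ≤ ({a | f a = n}.ncard : ℝ))
    (hsum : Summable fun a => Real.exp (-t * f a)) : u < t := by
  have hzero : Tendsto (fun n : ℤ => ({a | f a = n}.ncard : ℝ) * Real.exp (-t * n))
      atTop (nhds 0) :=
    ((summable_comp_iff_summable_ncard_fiber_mul (g := fun n : ℤ => Real.exp (-t * n)) hf
      fun n => (Real.exp_pos _).le).1 hsum).tendsto_cofinite_zero.mono_left atTop_le_cofinite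
  obtain ⟨n, hn, hsmall, hn0⟩ := (hcard.and_eventually
    ((hzero.eventually_lt_const one_pos).and (eventually_gt_atTop 0))).exists
  have hexp : Real.exp (n * (u - t)) < 1 := calc
    Real.exp (n * (u - t)) = Real.exp (n * u) * Real.exp (-t * n) := by
      rw [← Real.exp_add]
      ring_nf
    _ ≤ ({a | f a = n}.ncard : ℝ) * Real.exp (-t * n) := by gcongr
    _ < 1 := hsmall
  rw [Real.exp_lt_one_iff] at hexp
  exact sub_neg.1 (neg_of_mul_neg_right hexp (by positivity))

section Weights

variable {α : Type*} {𝓕 : Filter α}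

theorem isTheta_one_of_forall_mem_Icc {a : α → ℝ} {c C : ℝ} (hc : 0 < c)
    (ha : ∀ x, a x ∈ Icc c C) : a =Θ[𝓕] fun _ => (1 : ℝ) := by
  have hnorm (x : α) : ‖a x‖ = a x := Real.norm_of_nonneg (hc.le.trans (ha x).1)
  refine ⟨.of_bound C (.of_forall fun x => ?_), .of_bound c⁻¹ (.of_forall fun x => ?_)⟩
  · simpa [hnorm] using (ha x).2
  · rw [hnorm, norm_one, ← div_eq_inv_mul, one_le_div hc]
    exact (ha x).1

theorem tendsto_atTop_of_isBoundedUnder_abs_sub {w v : α → ℝ} (hv : Tendsto v 𝓕 atTop)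
    (hwv : 𝓕.IsBoundedUnder (· ≤ ·) fun x => |w x - v x|) : Tendsto w 𝓕 atTop := by
  obtain ⟨D, hD⟩ := hwv
  refine tendsto_atTop_mono' _ ?_ (tendsto_atTop_add_const_right _ (-D) hv)
  filter_upwards [eventually_map.1 hD] with x hx
  linarith [(abs_le.1 hx).1]

theorem isTheta_one_add_rpow_rpow_neg_half {w v : α → ℝ} {l : ℝ} (hl : 1 < l) (s : ℝ)
    (hv : Tendsto v 𝓕 atTop) (hwv : 𝓕.IsBoundedUnder (· ≤ ·) fun x => |w x - v x|) :
    (fun x => (1 + l ^ (2 * w x)) ^ (-(s / 2))) =Θ[𝓕]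
      fun x => Real.exp (-(s * Real.log l) * v x) := by
  have hl0 : 0 < l := one_pos.trans hl
  have hw : Tendsto w 𝓕 atTop := tendsto_atTop_of_isBoundedUnder_abs_sub hv hwv
  have htop : Tendsto (fun x => l ^ (2 * w x)) 𝓕 atTop :=
    (tendsto_rpow_atTop_of_base_gt_one l hl).comp (hw.const_mul_atTop two_pos)
  have hbase : (fun x => 1 + l ^ (2 * w x)) =Θ[𝓕] fun x => l ^ (2 * w x) :=
    (IsEquivalent.refl.const_add_of_norm_tendsto_atTop
      (tendsto_norm_atTop_atTop.comp htop)).isTheta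
  calc (fun x => (1 + l ^ (2 * w x)) ^ (-(s / 2)))
      =Θ[𝓕] fun x => (l ^ (2 * w x)) ^ (-(s / 2)) :=
        hbase.rpow (.of_forall fun x => by positivity) (.of_forall fun x => by positivity)
    _ = fun x => Real.exp (-(s * Real.log l) * w x) := by
        ext x
        rw [← Real.rpow_mul hl0.le, Real.rpow_def_of_pos hl0]
        ring_nf
    _ =Θ[𝓕] fun x => Real.exp (-(s * Real.log l) * v x) := by
        obtain ⟨D, hD⟩ := hwv
        refine Real.isTheta_exp_comp_exp_comp.2 ⟨|-(s * Real.log l)| * D, eventually_map.2 ?_⟩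
        filter_upwards [eventually_map.1 hD] with x hx
        rw [← mul_sub, abs_mul]
        gcongr

end Weights

theorem spectral_dimension_is_entropy_general {S : Type*} {shell : S → ℤ} {ω a : S → ℝ} {l h : ℝ}
    (hshell : Tendsto shell cofinite atTop)
    (hω : cofinite.IsBoundedUnder (· ≤ ·) fun x => |ω x - shell x|) (hl : 1 < l) (hh : 0 ≤ h)
    (hupper : ∀ u, h < u →
      ∀ᶠ n : ℤ in atTop, ({x | shell x = n}.ncard : ℝ) ≤ Real.exp (n * u))
    (hlower : ∀ u, u < h →
      ∃ᶠ n : ℤ in atTop, Real.exp (n * u) ≤ ({x | shell x = n}.ncard : ℝ))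
    (ha : a =Θ[cofinite] fun _ => (1 : ℝ)) :
    sInf {s : ℝ | 0 < s ∧ Summable fun x => a x * (1 + l ^ (2 * ω x)) ^ (-(s / 2))}
      = h / Real.log l := by
  have hlog : 0 < Real.log l := Real.log_pos hl
  have hsum (s : ℝ) : (Summable fun x => a x * (1 + l ^ (2 * ω x)) ^ (-(s / 2))) ↔
      Summable fun x => Real.exp (-(s * Real.log l) * shell x) := by
    simpa using (ha.mul (isTheta_one_add_rpow_rpow_neg_half hl s
      (tendsto_intCast_atTop_atTop.comp hshell) hω)).summable_iff
  have hIoi : Ioi (h / Real.log l) ⊆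
      {s : ℝ | 0 < s ∧ Summable fun x => a x * (1 + l ^ (2 * ω x)) ^ (-(s / 2))} := by
    intro s hs
    obtain ⟨u, hu, hut⟩ := exists_between ((div_lt_iff₀ hlog).1 hs)
    exact ⟨(div_nonneg hh hlog.le).trans_lt hs,
      (hsum s).2 (summable_exp_neg_mul_of_eventually_ncard_fiber_le hshell (hupper u hu) hut)⟩
  have hIci : {s : ℝ | 0 < s ∧ Summable fun x => a x * (1 + l ^ (2 * ω x)) ^ (-(s / 2))} ⊆
      Ici (h / Real.log l) := by
    rintro s ⟨-, hs⟩
    refine (div_le_iff₀ hlog).2 (le_of_forall_lt fun u hu => ?_)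
    exact lt_of_frequently_le_ncard_fiber_of_summable_exp_neg_mul
      (hshell.mono_right atTop_le_cofinite) (hlower u hu) ((hsum s).1 hs)
  exact (isGLB_Ioi.of_subset_of_superset isGLB_Ici hIoi hIci).csInf_eq (nonempty_Ioi.mono hIoi)

/-- Spectral dimension of the Dirac operator `𝔇 δ_x = λ^{ω(x)} δ_x`: with `S` countable
partitioned into finite shells `S_n` (`n ≥ M`), `n ≤ ω ≤ n+1` on `S_n`, `λ > 1`, and
shell counts satisfying `e^{n(h−ε)} ≤ #S_n ≤ e^{n(h+ε)}` eventually for every `ε > 0`,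
and `a : S → (0,∞)` bounded above and below away from zero, one has
`inf{s > 0 : Σ_x a(x)(1+λ^{2ω(x)})^{-s/2} < ∞} = h / log λ`. -/
theorem spectral_dimension_is_entropy {S : Type*} [Countable S]
    (M : ℤ) (shell : S → ℤ) (hshell_ge : ∀ x : S, M ≤ shell x)
    (hfin : ∀ n : ℤ, {x : S | shell x = n}.Finite)
    (ω : S → ℝ) (hω : ∀ x : S, (shell x : ℝ) ≤ ω x ∧ ω x ≤ shell x + 1)
    (l : ℝ) (hl : 1 < l) (h : ℝ) (hh : 0 ≤ h)
    (hcount : ∀ ε : ℝ, 0 < ε → ∃ N : ℤ, ∀ n : ℤ, N ≤ n →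
      Real.exp (n * (h - ε)) ≤ ({x : S | shell x = n}.ncard : ℝ) ∧
      ({x : S | shell x = n}.ncard : ℝ) ≤ Real.exp (n * (h + ε)))
    (a : S → ℝ) (c C : ℝ) (hc : 0 < c)
    (ha : ∀ x : S, c ≤ a x ∧ a x ≤ C) :
    sInf {s : ℝ | 0 < s ∧
        Summable fun x : S => a x * (1 + l ^ (2 * ω x)) ^ (-(s / 2))}
      = h / Real.log l := by
  have hshell : Tendsto shell cofinite atTop :=
    tendsto_cofinite_atTop_of_finite_fiber ⟨M, forall_mem_range.2 hshell_ge⟩ hfin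
  refine spectral_dimension_is_entropy_general hshell
    (isBoundedUnder_of ⟨1, fun x => abs_le.2 ⟨?_, ?_⟩⟩) hl hh
    (fun u hu => ?_) (fun u hu => Eventually.frequently ?_) (isTheta_one_of_forall_mem_Icc hc ha)
  · linarith [(hω x).1]
  · linarith [(hω x).2]
  · simpa using (eventually_atTop.2 (hcount (u - h) (sub_pos.2 hu))).mono fun _ hn => hn.2
  · simpa using (eventually_atTop.2 (hcount (h - u) (sub_pos.2 hu))).mono fun _ hn => hn.1
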